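/- Rank of the modified interleaved error: In the erasure-decoding setting (with n = m, normal basis element β, dual normal basis element β⊥, g_j = (β⊥)^{q^j}, error decomposition e^(i) = a^(i,R)·B^(i,R) + a^(i,C)·B^(C) + a^(i,E)·B^(E), interpolation polynomials ẽ^(i), elements d^(C)_l, and annihilator polynomials Γ^(C), Λ^(i,R)), define e^(i,E) = a^(i,E)·B^(E) ∈ 𝔽_{q^m}^n and e^(i,RC) ∈ 𝔽_{q^m}^n by e^(i,RC)_j = Λ^(i,R)(ẽ^(i)(Γ̃^(C)(g_j^{q^γ}))) for j = 0,…,n−1, where Γ̃^(C) is the full q-reverse of Γ^(C). Then the rank of the s×n matrix over 𝔽_{q^m} with rows e^(1,RC),…,e^(s,RC) is at most the rank of the s×n matrix with rows e^(1,E),…,e^(s,E). -/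

import Mathlib

/-!
Each interpolation polynomial `et i` acts as the `Fq`-linear map sending the dual normal basis
element `β' ^ q ^ k` to `e i k`, so at `z` it takes the value `∑ k, Tr(β ^ q ^ k * z) • e i k`.
In this sum the column-erasure part has the coefficients `Tr(dC l * z)`.

The full `q`-reverse is the adjoint for the trace form, `Tr(y * Γ̃(x)) = Tr(Γ(y) * x)`
(`trace_mul_qEval_qReverse`). Hence these coefficients vanish at `z = Γ̃(x)`, because `Γ`
annihilates every `dC l`. The row-erasure part of the value is an `Fq`-combination of the
`aR i l`, so it is killed by `ΛR i`. What is left is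
`eRC i j = ΛR i (∑ k, Tr(β ^ q ^ k * z_j) • eE i k)` with `z_j = Γ̃((β' ^ q ^ j) ^ q ^ γ)`.

Thus every column of `eRC` is the image of an `Fq`-combination of the columns of `eE` under one
`Fq`-linear map `K ^ s → K ^ s`, which acts as `ΛR i` on the `i`-th coordinate, and such an
operation cannot increase the dimension of the column span (`rankFq_le_of_columns`).
-/

/-- Evaluation of the linearized polynomial with coefficient sequence `c`
(finitely supported) at `x`: `∑ i, c i * x ^ (q ^ i)`. -/
noncomputable def qEval {K : Type*} [Field K] (q : ℕ) (c : ℕ → K) (x : K) : K :=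
  ∑ᶠ i, c i * x ^ q ^ i

/-- The q-degree of a linearized polynomial given by its (finitely supported)
coefficient sequence. -/
noncomputable def qDegree {K : Type*} [Field K] (p : ℕ → K) : ℕ :=
  sSup {i | p i ≠ 0}

/-- The full `q`-reverse of a linearized polynomial `p(x) = ∑_{i<m} p_i x^{q^i}`:
`p̃_i = (p_{(−i) mod m})^{q^i}` for `i < m`. -/
noncomputable def qReverse {K : Type*} [Field K] (q m : ℕ) (p : ℕ → K) : ℕ → K :=
  fun i => if i < m then (p ((m - i) % m)) ^ q ^ i else 0

/-- The `𝔽_q`-rank of a matrix over the extension field `K`. -/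
noncomputable def rankFq (Fq : Type*) {K : Type*} [Field Fq] [Field K] [Algebra Fq K]
    {s n : ℕ} (E : Matrix (Fin s) (Fin n) K) : ℕ :=
  Module.finrank Fq (Submodule.span Fq (Set.range fun j : Fin n => fun i : Fin s => E i j))

lemma qEval_eq_sum {K : Type*} [Field K] (q D : ℕ) (c : ℕ → K)
    (hc : ∀ j, D ≤ j → c j = 0) (x : K) :
    qEval q c x = ∑ i ∈ Finset.range D, c i * x ^ q ^ i := by
  unfold qEval
  apply finsum_eq_sum_of_support_subset
  intro i hi
  by_contra h
  simp only [Finset.coe_range, Set.mem_Iio, not_lt] at h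
  exact hi (by simp [hc i h])

/-- A linearized polynomial with finitely many coefficients induces an `Fq`-linear map. -/
lemma exists_linearMap_qEval (Fq : Type*) {K : Type*} [Field Fq] [Fintype Fq] [Field K]
    [Algebra Fq K] (c : ℕ → K) (hc : ∃ D, ∀ j, D ≤ j → c j = 0) :
    ∃ L : K →ₗ[Fq] K, ∀ x, L x = qEval (Fintype.card Fq) c x := by
  obtain ⟨D, hD⟩ := hc
  refine ⟨∑ i ∈ Finset.range D,
    (LinearMap.mulLeft Fq (c i)).comp ((FiniteField.frobeniusAlgHom Fq K) ^ i).toLinearMap, ?_⟩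
  intro x
  rw [qEval_eq_sum _ D c hD]
  have h : ∀ i : ℕ, ((FiniteField.frobeniusAlgHom Fq K) ^ i) x = x ^ Fintype.card Fq ^ i := by
    intro i
    induction i with
    | zero => simp
    | succ k ih =>
      rw [pow_succ', AlgHom.mul_apply, ih, FiniteField.frobeniusAlgHom_apply, ← pow_mul, pow_succ]
  rw [LinearMap.sum_apply]
  refine Finset.sum_congr rfl fun i _ => ?_
  change c i * ((FiniteField.frobeniusAlgHom Fq K) ^ i) x = _
  rw [h]

lemma trace_pow_card_pow (Fq : Type*) {K : Type*} [Field Fq] [Fintype Fq] [Field K] [Finite K]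
    [Algebra Fq K] (x : K) (i : ℕ) :
    Algebra.trace Fq K (x ^ Fintype.card Fq ^ i) = Algebra.trace Fq K x := by
  induction i with
  | zero => simp
  | succ k ih =>
    rw [← ih, pow_succ, pow_mul]
    exact Algebra.trace_eq_of_algEquiv (FiniteField.frobeniusAlgEquivOfAlgebraic Fq K) _

/-- The full `q`-reverse is the adjoint of `Γ` with respect to the trace form. -/
lemma trace_mul_qEval_qReverse (Fq : Type*) {K : Type*} [Field Fq] [Fintype Fq] [Field K]
    [Fintype K] [Algebra Fq K] (m : ℕ) (hm : Module.finrank Fq K = m) (Γ : ℕ → K)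
    (hΓ : ∀ j, m ≤ j → Γ j = 0) (x y : K) :
    Algebra.trace Fq K (y * qEval (Fintype.card Fq) (qReverse (Fintype.card Fq) m Γ) x)
      = Algebra.trace Fq K (qEval (Fintype.card Fq) Γ y * x) := by
  have hmpos : 0 < m := hm ▸ Module.finrank_pos
  have hcard : Fintype.card K = Fintype.card Fq ^ m := by rw [← hm]; exact Module.card_eq_pow_finrank
  rw [qEval_eq_sum _ m Γ hΓ, qEval_eq_sum _ m (qReverse (Fintype.card Fq) m Γ)
    (fun j hj => by simp [qReverse, hj]), Finset.mul_sum, Finset.sum_mul, map_sum, map_sum]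
  have hinv : ∀ i ∈ Finset.range m, (m - (m - i) % m) % m = i := by
    intro i hi
    rw [Finset.mem_range] at hi
    rcases Nat.eq_zero_or_pos i with rfl | h0
    · simp
    · rw [Nat.mod_eq_of_lt (show m - i < m by omega), Nat.sub_sub_self hi.le, Nat.mod_eq_of_lt hi]
  refine Finset.sum_nbij' (fun i => (m - i) % m) (fun i => (m - i) % m)
    (fun i _ => Finset.mem_range.2 (Nat.mod_lt _ hmpos))
    (fun i _ => Finset.mem_range.2 (Nat.mod_lt _ hmpos)) hinv hinv ?_
  intro i hi
  -- The exponents `i` and `(m - i) % m` add up to `0` or `m`, so together they fix `y`.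
  have hy : y ^ Fintype.card Fq ^ ((m - i) % m + i) = y := by
    have hi' := Finset.mem_range.1 hi
    rcases Nat.eq_zero_or_pos i with rfl | h0
    · simp
    · rw [Nat.mod_eq_of_lt (show m - i < m by omega), Nat.sub_add_cancel hi'.le, ← hcard,
        FiniteField.pow_card]
  rw [← trace_pow_card_pow Fq (Γ ((m - i) % m) * y ^ Fintype.card Fq ^ ((m - i) % m) * x) i,
    mul_pow, mul_pow, ← pow_mul y, ← pow_add, hy]
  simp only [qReverse, if_pos (Finset.mem_range.1 hi)]
  congr 1
  ring

/-- A family dual to another one for the trace form, of the right cardinality, is spanning, with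
the traces as coordinates. -/
lemma sum_trace_smul_dual (Fq : Type*) {K : Type*} [Field Fq] [Field K]
    [Algebra Fq K] [FiniteDimensional Fq K] (m : ℕ) (hm : Module.finrank Fq K = m) (b b' : Fin m → K)
    (hdual : ∀ i j, Algebra.trace Fq K (b i * b' j) = if i = j then 1 else 0) (z : K) :
    ∑ k, Algebra.trace Fq K (b k * z) • b' k = z := by
  have key : ∀ c : Fin m → Fq, ∀ i, Algebra.trace Fq K (b i * ∑ k, c k • b' k) = c i := by
    intro c i
    simp [Finset.mul_sum, hdual]
  have hli : LinearIndependent Fq b' := by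
    rw [Fintype.linearIndependent_iff]
    intro c hc i
    rw [← key c i, hc]
    simp
  have hspan := hli.span_eq_top_of_card_eq_finrank' (by simp [hm])
  obtain ⟨c, hc⟩ := (Submodule.mem_span_range_iff_exists_fun Fq).1
    (show z ∈ Submodule.span Fq (Set.range b') by rw [hspan]; trivial)
  rw [← hc]
  simp only [key]

/-- Fixed `Fq`-linear maps applied to the rows, together with `Fq`-combinations of the columns,
do not increase the `Fq`-rank: the column span of `A` lies in the image of that of `B` under the
map acting as `L i` on the `i`-th coordinate. -/
lemma rankFq_le_of_columns (Fq : Type*) {K : Type*} [Field Fq] [Field K] [Algebra Fq K]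
    {s n n' : ℕ} (A : Matrix (Fin s) (Fin n) K) (B : Matrix (Fin s) (Fin n') K)
    (L : Fin s → K →ₗ[Fq] K) (c : Fin n → Fin n' → Fq)
    (h : ∀ i j, A i j = L i (∑ k, c j k • B i k)) : rankFq Fq A ≤ rankFq Fq B := by
  unfold rankFq
  set S := Submodule.span Fq (Set.range fun j : Fin n' => fun i : Fin s => B i j)
  have : FiniteDimensional Fq S := FiniteDimensional.span_of_finite Fq (Set.finite_range _)
  let M : (Fin s → K) →ₗ[Fq] (Fin s → K) := LinearMap.pi fun i => (L i).comp (LinearMap.proj i)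
  refine le_trans (Submodule.finrank_mono (t := S.map M) ?_) (Submodule.finrank_map_le M S)
  rw [Submodule.span_le]
  rintro _ ⟨j, rfl⟩
  refine ⟨∑ k, c j k • fun i => B i k,
    Submodule.sum_mem _ fun k _ => Submodule.smul_mem _ _ (Submodule.subset_span ⟨k, rfl⟩), ?_⟩
  funext i
  simp [M, h]

theorem rank_of_modified_interleaved_error
    (Fq K : Type) [Field Fq] [Fintype Fq] [Field K] [Fintype K] [Algebra Fq K]
    (q m s : ℕ) (hq : q = Fintype.card Fq) (hm : Module.finrank Fq K = m)
    -- β generates a normal basis, β⊥ its trace-dual normal basis; g_j = (β⊥)^{q^j}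
    (β β' : K)
    (hβ : LinearIndependent Fq (fun i : Fin m => β ^ q ^ (i : ℕ)))
    (hdual : ∀ i j : Fin m,
      Algebra.trace Fq K (β ^ q ^ (i : ℕ) * β' ^ q ^ (j : ℕ)) = if i = j then 1 else 0)
    -- error decomposition e⁽ⁱ⁾ = a⁽ⁱ'ᴿ⁾·B⁽ⁱ'ᴿ⁾ + a⁽ⁱ'ᶜ⁾·B⁽ᶜ⁾ + a⁽ⁱ'ᴱ⁾·B⁽ᴱ⁾
    (ρ : Fin s → ℕ) (γ t : ℕ)
    (aR : (i : Fin s) → Fin (ρ i) → K) (BR : (i : Fin s) → Matrix (Fin (ρ i)) (Fin m) Fq)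
    (aC : Fin s → Fin γ → K) (BC : Matrix (Fin γ) (Fin m) Fq)
    (aE : Fin s → Fin t → K) (BE : Matrix (Fin t) (Fin m) Fq)
    (e : Fin s → Fin m → K)
    (he : ∀ i j, e i j = (∑ l, BR i l j • aR i l) + (∑ l, BC l j • aC i l)
      + (∑ l, BE l j • aE i l))
    -- d⁽ᶜ⁾_l = ∑_j B⁽ᶜ⁾_{l,j} β^{q^j}
    (dC : Fin γ → K) (hdC : ∀ l, dC l = ∑ j : Fin m, BC l j • β ^ q ^ (j : ℕ))
    -- ẽ⁽ⁱ⁾ : the linearized interpolation polynomial of e⁽ⁱ⁾, of q-degree < n = m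
    (et : Fin s → ℕ → K) (hetdeg : ∀ i j, m ≤ j → et i j = 0)
    (hetval : ∀ i (j : Fin m), qEval q (et i) (β' ^ q ^ (j : ℕ)) = e i j)
    -- Γ⁽ᶜ⁾ : nonzero annihilator of the d⁽ᶜ⁾_l of smallest q-degree
    (Γ : ℕ → K) (hΓne : Γ ≠ 0) (hΓdeg : ∀ j, m ≤ j → Γ j = 0)
    (hΓann : ∀ l, qEval q Γ (dC l) = 0)
    (hΓmin : ∀ Γ' : ℕ → K, Γ' ≠ 0 → (∃ D, ∀ j, D ≤ j → Γ' j = 0) →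
      (∀ l, qEval q Γ' (dC l) = 0) → qDegree Γ ≤ qDegree Γ')
    -- Λ⁽ⁱ'ᴿ⁾ : nonzero annihilator of the a⁽ⁱ'ᴿ⁾_l of smallest q-degree
    (ΛR : Fin s → ℕ → K) (hΛRne : ∀ i, ΛR i ≠ 0)
    (hΛRfin : ∀ i, ∃ D, ∀ j, D ≤ j → ΛR i j = 0)
    (hΛRann : ∀ i l, qEval q (ΛR i) (aR i l) = 0)
    (hΛRmin : ∀ i, ∀ Λ' : ℕ → K, Λ' ≠ 0 → (∃ D, ∀ j, D ≤ j → Λ' j = 0) →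
      (∀ l, qEval q Λ' (aR i l) = 0) → qDegree (ΛR i) ≤ qDegree Λ')
    -- e⁽ⁱ'ᴱ⁾ = a⁽ⁱ'ᴱ⁾·B⁽ᴱ⁾ and the modified transformed error e⁽ⁱ'ᴿᶜ⁾
    (eE : Fin s → Fin m → K) (heE : ∀ i j, eE i j = ∑ l, BE l j • aE i l)
    (eRC : Fin s → Fin m → K)
    (heRC : ∀ i (j : Fin m), eRC i j =
      qEval q (ΛR i) (qEval q (et i)
        (qEval q (qReverse q m Γ) ((β' ^ q ^ (j : ℕ)) ^ q ^ γ)))) :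
    rankFq Fq (Matrix.of fun i j => eRC i j) ≤ rankFq Fq (Matrix.of fun i j => eE i j) := by
  subst hq
  choose L hL using fun i => exists_linearMap_qEval Fq (ΛR i) (hΛRfin i)
  choose Φ hΦ using fun i => exists_linearMap_qEval Fq (et i) ⟨m, hetdeg i⟩
  have hz := sum_trace_smul_dual Fq m hm _ _ hdual
  set q := Fintype.card Fq
  let z : Fin m → K := fun j => qEval q (qReverse q m Γ) ((β' ^ q ^ (j : ℕ)) ^ q ^ γ)
  let c : Fin m → Fin m → Fq := fun j k => Algebra.trace Fq K (β ^ q ^ (k : ℕ) * z j)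
  refine rankFq_le_of_columns Fq _ _ L c ?_
  intro i j
  have hΦz : Φ i (z j) = ∑ k, c j k • e i k := by
    conv_lhs => rw [← hz (z j)]
    simp only [map_sum, map_smul]
    simp only [hΦ, hetval, c]
  have hC : ∀ l, ∑ k, c j k * BC l k = 0 := by
    intro l
    have h1 : ∑ k, c j k * BC l k = Algebra.trace Fq K (dC l * z j) := by
      rw [hdC, Finset.sum_mul, map_sum]
      refine Finset.sum_congr rfl fun k _ => ?_
      rw [smul_mul_assoc, map_smul, smul_eq_mul, mul_comm]
    rw [h1, trace_mul_qEval_qReverse Fq m hm Γ hΓdeg, hΓann, zero_mul, map_zero]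
  have hsplit : ∑ k, c j k • e i k =
      (∑ l, (∑ k, c j k * BR i l k) • aR i l) + ∑ k, c j k • eE i k := by
    have hCz : ∑ k, c j k • ∑ l, BC l k • aC i l = 0 := by
      simp only [Finset.smul_sum, smul_smul]
      rw [Finset.sum_comm]
      simp only [← Finset.sum_smul, hC, zero_smul, Finset.sum_const_zero]
    have hR : ∑ k, c j k • ∑ l, BR i l k • aR i l
        = ∑ l, (∑ k, c j k * BR i l k) • aR i l := by
      simp only [Finset.smul_sum, smul_smul, Finset.sum_smul]
      rw [Finset.sum_comm]
    simp only [he, heE, smul_add, Finset.sum_add_distrib]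
    rw [hCz, hR, add_zero]
  have hRz : L i (∑ l, (∑ k, c j k * BR i l k) • aR i l) = 0 := by
    simp only [map_sum, map_smul]
    simp only [hL, hΛRann, smul_zero, Finset.sum_const_zero]
  simp only [Matrix.of_apply]
  rw [heRC, ← hΦ, ← hL]
  change L i (Φ i (z j)) = _
  rw [hΦz, hsplit, map_add, hRz, zero_add]
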